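/- (Maximum principle, positive λ.) Let n ≥ 1 be a natural number, let α ∈ (4n−3, 4n−1), set ν = (1−α)/2, let 0 < η < 1, and suppose (H_0) holds: 0 < λ < j_{ν,1}², 0 < δ < 1, δ·η^ν·J_ν(η·√λ) − J_ν(√λ) ≥ 0, and J_{−ν}(√λ) − δ·η^ν·J_{−ν}(η·√λ) > 0. If y : [0,1] → ℝ is continuous on [0,1], continuously differentiable on [0,1], twice differentiable on (0,1), and satisfies −(x^α·y'(x))' − λ·x^α·y(x) ≥ 0 for all x ∈ (0,1), y'(0) = 0, and y(1) ≥ δ·y(η), then y(x) ≥ 0 for all x ∈ [0,1]. -/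

import Mathlib

/-- The Bessel function of the first kind of real order `μ`. -/
noncomputable def besselJ (μ x : ℝ) : ℝ :=
  ∑' m : ℕ, ((-1 : ℝ) ^ m / ((m.factorial : ℝ) * Real.Gamma ((m : ℝ) + μ + 1))) *
    (x / 2) ^ (2 * (m : ℝ) + μ)

/-!
Let `μ = -ν = (α - 1) / 2`. The function `φ x = x ^ (-μ) * J_μ (√λ x)` extends to an entire function
of `x ^ 2` and solves `(x ^ α φ')' + λ x ^ α φ = 0`. If `φ > 0` on `[0, 1]`, the Lagrange identity
makes `x ^ α (y' φ - y φ')` nonincreasing; as it vanishes at `0`, the quotient `y / φ` is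
nonincreasing. Comparing its values at `η` and `1` with `y 1 ≥ δ y η` and `φ 1 > δ φ η` yields
`y 1 ≥ 0`, hence `y ≥ 0`.

Since `φ 0 > 0`, positivity of `φ` means that `J_μ` has no zero on `(0, √λ]`. This follows from the
same property of `J_{-μ}`. If `μ` is an integer, `J_{-μ} = ± J_μ`. Otherwise the Wronskian identity
shows that the derivative of `J_μ / J_{-μ}` has no zero on `(0, √λ]`; as the quotient tends to `0`
at `0`, a zero of `J_μ` would contradict Rolle's theorem.
-/

open Set

section SturmComparison

variable {p q u v u' v' Lu : ℝ → ℝ} {a b : ℝ}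

lemma hasDerivAt_mul_wronskian {du dv x : ℝ}
    (hu : HasDerivAt u (u' x) x) (hv : HasDerivAt v (v' x) x)
    (hLu : HasDerivAt (fun t ↦ p t * u' t) du x) (hLv : HasDerivAt (fun t ↦ p t * v' t) dv x) :
    HasDerivAt (fun t ↦ p t * (u' t * v t - u t * v' t)) (du * v x - u x * dv) x := by
  have hfun : (fun t ↦ p t * (u' t * v t - u t * v' t)) =
      (fun t ↦ p t * u' t) * v - u * fun t ↦ p t * v' t := by
    funext t
    simp only [Pi.sub_apply, Pi.mul_apply]
    ring
  rw [hfun]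
  exact ((hLu.mul hv).sub (hu.mul hLv)).congr_deriv (by ring)

lemma antitoneOn_mul_wronskian (hp : ContinuousOn p (Icc a b))
    (huc : ContinuousOn u (Icc a b)) (hvc : ContinuousOn v (Icc a b))
    (hu'c : ContinuousOn u' (Icc a b)) (hv'c : ContinuousOn v' (Icc a b))
    (hu : ∀ x ∈ Ioo a b, HasDerivAt u (u' x) x) (hv : ∀ x ∈ Ioo a b, HasDerivAt v (v' x) x)
    (hLu : ∀ x ∈ Ioo a b, HasDerivAt (fun t ↦ p t * u' t) (Lu x) x)
    (hLv : ∀ x ∈ Ioo a b, HasDerivAt (fun t ↦ p t * v' t) (-(q x * v x)) x)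
    (hsuper : ∀ x ∈ Ioo a b, Lu x + q x * u x ≤ 0) (hv_nonneg : ∀ x ∈ Ioo a b, 0 ≤ v x) :
    AntitoneOn (fun x ↦ p x * (u' x * v x - u x * v' x)) (Icc a b) := by
  refine antitoneOn_of_hasDerivWithinAt_nonpos (convex_Icc a b)
    (f' := fun x ↦ Lu x * v x - u x * -(q x * v x))
    (hp.mul ((hu'c.mul hvc).sub (huc.mul hv'c))) ?_ ?_ <;> rw [interior_Icc] <;> intro x hx
  · exact (hasDerivAt_mul_wronskian (hu x hx) (hv x hx) (hLu x hx) (hLv x hx)).hasDerivWithinAt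
  · calc Lu x * v x - u x * -(q x * v x) = (Lu x + q x * u x) * v x := by ring
      _ ≤ 0 := mul_nonpos_of_nonpos_of_nonneg (hsuper x hx) (hv_nonneg x hx)

lemma antitoneOn_div_of_wronskian_nonpos
    (huc : ContinuousOn u (Icc a b)) (hvc : ContinuousOn v (Icc a b))
    (hu : ∀ x ∈ Ioo a b, HasDerivAt u (u' x) x) (hv : ∀ x ∈ Ioo a b, HasDerivAt v (v' x) x)
    (hv_ne : ∀ x ∈ Icc a b, v x ≠ 0) (hwr : ∀ x ∈ Ioo a b, u' x * v x - u x * v' x ≤ 0) :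
    AntitoneOn (fun x ↦ u x / v x) (Icc a b) := by
  refine antitoneOn_of_hasDerivWithinAt_nonpos (convex_Icc a b)
    (f' := fun x ↦ (u' x * v x - u x * v' x) / v x ^ 2) (huc.div hvc hv_ne) ?_ ?_ <;>
    rw [interior_Icc] <;> intro x hx
  · exact ((hu x hx).div (hv x hx) (hv_ne x (Ioo_subset_Icc_self hx))).hasDerivWithinAt
  · exact div_nonpos_of_nonpos_of_nonneg (hwr x hx) (sq_nonneg _)

theorem antitoneOn_div_of_sturmLiouville (hp : ContinuousOn p (Icc a b)) (hpa : p a = 0)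
    (hp_pos : ∀ x ∈ Ioo a b, 0 < p x)
    (huc : ContinuousOn u (Icc a b)) (hvc : ContinuousOn v (Icc a b))
    (hu'c : ContinuousOn u' (Icc a b)) (hv'c : ContinuousOn v' (Icc a b))
    (hu : ∀ x ∈ Ioo a b, HasDerivAt u (u' x) x) (hv : ∀ x ∈ Ioo a b, HasDerivAt v (v' x) x)
    (hLu : ∀ x ∈ Ioo a b, HasDerivAt (fun t ↦ p t * u' t) (Lu x) x)
    (hLv : ∀ x ∈ Ioo a b, HasDerivAt (fun t ↦ p t * v' t) (-(q x * v x)) x)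
    (hsuper : ∀ x ∈ Ioo a b, Lu x + q x * u x ≤ 0) (hv_pos : ∀ x ∈ Icc a b, 0 < v x) :
    AntitoneOn (fun x ↦ u x / v x) (Icc a b) := by
  refine antitoneOn_div_of_wronskian_nonpos huc hvc hu hv (fun x hx ↦ (hv_pos x hx).ne')
    fun x hx ↦ nonpos_of_mul_nonpos_right ?_ (hp_pos x hx)
  have hanti := antitoneOn_mul_wronskian hp huc hvc hu'c hv'c hu hv hLu hLv hsuper
    fun x hx ↦ (hv_pos x (Ioo_subset_Icc_self hx)).le
  simpa only [hpa, zero_mul] using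
    hanti (left_mem_Icc.2 (hx.1.trans hx.2).le) (Ioo_subset_Icc_self hx) hx.1.le

lemma nonneg_of_antitoneOn_div {δ η : ℝ} (hanti : AntitoneOn (fun x ↦ u x / v x) (Icc a b))
    (hv_pos : ∀ x ∈ Icc a b, 0 < v x) (hη : η ∈ Icc a b) (hδ : 0 ≤ δ)
    (hv_lt : δ * v η < v b) (hu_le : δ * u η ≤ u b) : ∀ x ∈ Icc a b, 0 ≤ u x := by
  have hb : b ∈ Icc a b := right_mem_Icc.2 (hη.1.trans hη.2)
  have hub : 0 ≤ u b / v b := by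
    have hquot_η : u b / v b * v η ≤ u η := (le_div_iff₀ (hv_pos η hη)).1 (hanti hη hb hη.2)
    have hprod : 0 ≤ u b / v b * (v b - δ * v η) := by
      calc 0 ≤ u b - δ * u η := sub_nonneg.2 hu_le
        _ ≤ u b - δ * (u b / v b * v η) := by gcongr
        _ = u b / v b * (v b - δ * v η) := by
          rw [mul_sub, div_mul_cancel₀ _ (hv_pos b hb).ne']
          ring
    exact nonneg_of_mul_nonneg_left hprod (sub_pos.2 hv_lt)
  intro x hx
  have hux : 0 ≤ u x / v x := hub.trans (hanti hx hb hx.2)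
  simpa only [div_mul_cancel₀ _ (hv_pos x hx).ne'] using mul_nonneg hux (hv_pos x hx).le

end SturmComparison

lemma hasDerivAt_tsum_mul_pow {c : ℕ → ℝ}
    (hc : ∀ r : ℝ, Summable fun m : ℕ ↦ (m + 1) * c (m + 1) * r ^ m) (z : ℝ) :
    HasDerivAt (fun w ↦ ∑' m, c m * w ^ m) (∑' m : ℕ, (m + 1) * c (m + 1) * z ^ m) z := by
  have hshift (r : ℝ) (m : ℕ) : c (m + 1) * ((m + 1 : ℕ) * r ^ (m + 1 - 1)) =
      (m + 1) * c (m + 1) * r ^ m := by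
    rw [Nat.add_sub_cancel]
    push_cast
    ring
  have hsum (r : ℝ) : Summable fun m : ℕ ↦ c m * (m * r ^ (m - 1)) :=
    (summable_nat_add_iff 1).1 <| (hc r).congr fun m ↦ (hshift r m).symm
  have hz : z ∈ Metric.ball (0 : ℝ) (|z| + 1) := by simp
  have hderiv := hasDerivAt_tsum_of_isPreconnected (hsum (|z| + 1)).abs Metric.isOpen_ball
    (convex_ball (0 : ℝ) (|z| + 1)).isPreconnected
    (g := fun m w ↦ c m * w ^ m) (g' := fun m w ↦ c m * (m * w ^ (m - 1)))
    (fun m w _ ↦ (hasDerivAt_pow m w).const_mul (c m))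
    (fun m w hw ↦ ?_) (Metric.mem_ball_self (by positivity))
    (summable_of_ne_finset_zero (s := {0}) fun m hm ↦ ?_) hz
  · refine hderiv.congr_deriv ?_
    rw [(hsum z).tsum_eq_zero_add]
    simp only [CharP.cast_eq_zero, zero_mul, mul_zero, zero_add, hshift]
  · have hw' : |w| ≤ |(|z| + 1)| := by
      rw [abs_of_pos (by positivity : 0 < |z| + 1)]
      simpa using (Metric.mem_ball.1 hw).le
    simp only [Real.norm_eq_abs, abs_mul, abs_pow]
    gcongr
  · simp [Finset.notMem_singleton.1 hm]

section BesselClifford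

/-- The Taylor coefficients `1 / (m! Γ(m + a + 1))` of the Bessel–Clifford function of order `a`.
They vanish at the poles of `Γ`, where Mathlib sets `Γ` and hence its inverse to `0`. -/
noncomputable def besselCliffordCoeff (a : ℝ) (m : ℕ) : ℝ :=
  (m.factorial * Real.Gamma (m + a + 1))⁻¹

/-- The Bessel–Clifford function of order `a`, an entire function of `z` which carries the Bessel
function as `J_a x = (x / 2) ^ a * besselClifford a (-(x ^ 2 / 4))`. -/
noncomputable def besselClifford (a z : ℝ) : ℝ := ∑' m, besselCliffordCoeff a m * z ^ m

lemma succ_mul_besselCliffordCoeff_succ (a : ℝ) (m : ℕ) :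
    (m + 1) * besselCliffordCoeff a (m + 1) = besselCliffordCoeff (a + 1) m := by
  have hm : (m : ℝ) + 1 ≠ 0 := by positivity
  rw [besselCliffordCoeff, besselCliffordCoeff, Nat.factorial_succ,
    show ((m + 1 : ℕ) : ℝ) + a + 1 = m + (a + 1) + 1 by push_cast; ring]
  push_cast
  rw [mul_assoc, mul_inv, mul_inv_cancel_left₀ hm]

lemma add_mul_besselCliffordCoeff_add_one (a : ℝ) (m : ℕ) :
    (m + a + 1) * besselCliffordCoeff (a + 1) m = besselCliffordCoeff a m := by
  rw [besselCliffordCoeff, besselCliffordCoeff, show (m : ℝ) + (a + 1) + 1 = m + a + 1 + 1 by ring]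
  rcases eq_or_ne ((m : ℝ) + a + 1) 0 with h | h
  · rw [h, Real.Gamma_zero, zero_mul, mul_zero, inv_zero]
  · rw [Real.Gamma_add_one h, mul_left_comm, mul_inv, mul_inv_cancel_left₀ h]

lemma ofReal_besselCliffordCoeff (a : ℝ) (m : ℕ) :
    (besselCliffordCoeff a m : ℂ) = Complex.regularizedHGFunCoeff 0 {(a + 1 : ℂ)} m := by
  simp only [besselCliffordCoeff, Complex.regularizedHGFunCoeff, Multiset.map_zero,
    Multiset.prod_zero, Multiset.map_singleton, Multiset.prod_singleton, one_div]
  push_cast [← Complex.Gamma_ofReal]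
  ring_nf

lemma summable_besselCliffordCoeff_mul_pow (a z : ℝ) :
    Summable fun m ↦ besselCliffordCoeff a m * z ^ m := by
  have hradius : (z : ℂ) ∈ Metric.eball 0
      (Complex.regularizedHGFunSeries 0 {(a + 1 : ℂ)}).radius := by
    rw [Complex.radius_regularizedHGFunSeries_eq_top (by simp)]
    simp
  rw [← Complex.summable_ofReal]
  refine (FormalMultilinearSeries.summable _ hradius).congr fun m ↦ ?_
  rw [Complex.regularizedHGFunSeries, FormalMultilinearSeries.ofScalars_apply_eq,
    ← ofReal_besselCliffordCoeff, smul_eq_mul]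
  push_cast
  rfl

lemma hasDerivAt_besselClifford (a z : ℝ) :
    HasDerivAt (besselClifford a) (besselClifford (a + 1) z) z := by
  have hderiv := hasDerivAt_tsum_mul_pow (c := besselCliffordCoeff a) (fun r ↦ by
    simpa only [succ_mul_besselCliffordCoeff_succ] using
      summable_besselCliffordCoeff_mul_pow (a + 1) r) z
  simp only [succ_mul_besselCliffordCoeff_succ] at hderiv
  exact hderiv

@[fun_prop]
lemma continuous_besselClifford (a : ℝ) : Continuous (besselClifford a) :=
  continuous_iff_continuousAt.2 fun z ↦ (hasDerivAt_besselClifford a z).continuousAt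

lemma besselClifford_zero (a : ℝ) : besselClifford a 0 = (Real.Gamma (a + 1))⁻¹ := by
  rw [besselClifford, tsum_eq_single 0 fun m hm ↦ by simp [hm]]
  simp [besselCliffordCoeff]

lemma besselClifford_recurrence (a z : ℝ) :
    z * besselClifford (a + 1 + 1) z + (a + 1) * besselClifford (a + 1) z =
      besselClifford a z := by
  have hshift : HasSum (fun m : ℕ ↦ m * besselCliffordCoeff (a + 1) m * z ^ m)
      (z * besselClifford (a + 1 + 1) z) := by
    rw [← hasSum_nat_add_iff' 1]
    simp only [Finset.sum_range_one, CharP.cast_eq_zero, zero_mul, sub_zero]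
    refine ((summable_besselCliffordCoeff_mul_pow (a + 1 + 1) z).hasSum.mul_left z).congr_fun
      fun m ↦ ?_
    rw [← succ_mul_besselCliffordCoeff_succ (a + 1) m]
    push_cast
    ring
  have hsum := hshift.add
    ((summable_besselCliffordCoeff_mul_pow (a + 1) z).hasSum.mul_left (a + 1))
  refine hsum.unique
    ((summable_besselCliffordCoeff_mul_pow a z).hasSum.congr_fun fun m ↦ ?_)
  rw [← add_mul_besselCliffordCoeff_add_one a]
  ring

lemma besselClifford_wronskian (μ z : ℝ) :
    z * (besselClifford (μ + 1) z * besselClifford (-μ) z -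
        besselClifford μ z * besselClifford (-μ + 1) z) +
      μ * (besselClifford μ z * besselClifford (-μ) z) =
      μ * (besselClifford μ 0 * besselClifford (-μ) 0) := by
  let W : ℝ → ℝ := fun z ↦ z * (besselClifford (μ + 1) z * besselClifford (-μ) z -
      besselClifford μ z * besselClifford (-μ + 1) z) +
    μ * (besselClifford μ z * besselClifford (-μ) z)
  have hW (z : ℝ) : HasDerivAt W 0 z := by
    have hpos := hasDerivAt_besselClifford μ z
    have hneg := hasDerivAt_besselClifford (-μ) z
    have hderiv := ((hasDerivAt_id z).mul
      (((hasDerivAt_besselClifford (μ + 1) z).mul hneg).sub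
        (hpos.mul (hasDerivAt_besselClifford (-μ + 1) z)))).add ((hpos.mul hneg).const_mul μ)
    refine hderiv.congr_deriv ?_
    simp only [id, Pi.mul_apply, Pi.sub_apply]
    linear_combination besselClifford (-μ) z * besselClifford_recurrence μ z -
      besselClifford μ z * besselClifford_recurrence (-μ) z
  simpa [W] using is_const_of_deriv_eq_zero (fun z ↦ (hW z).differentiableAt)
    (fun z ↦ (hW z).deriv) z 0

lemma besselCliffordCoeff_neg_natCast_of_lt {k m : ℕ} (h : m < k) :
    besselCliffordCoeff (-k) m = 0 := by
  have hpole : (m : ℝ) + -k + 1 = -((k - (m + 1) : ℕ) : ℝ) := by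
    rw [Nat.cast_sub h]
    push_cast
    ring
  rw [besselCliffordCoeff, hpole, Real.Gamma_neg_nat_eq_zero, mul_zero, inv_zero]

lemma besselCliffordCoeff_neg_natCast_add (k m : ℕ) :
    besselCliffordCoeff (-k) (m + k) = besselCliffordCoeff k m := by
  rw [besselCliffordCoeff, besselCliffordCoeff, ← Nat.cast_add, Real.Gamma_nat_eq_factorial,
    show ((m + k : ℕ) : ℝ) + -k + 1 = m + 1 by push_cast; ring, Real.Gamma_nat_eq_factorial,
    mul_comm]

lemma besselClifford_neg_natCast (k : ℕ) (z : ℝ) :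
    besselClifford (-k) z = z ^ k * besselClifford k z := by
  rw [besselClifford, ← (summable_besselCliffordCoeff_mul_pow (-k) z).sum_add_tsum_nat_add k,
    Finset.sum_eq_zero fun m hm ↦ by
      rw [besselCliffordCoeff_neg_natCast_of_lt (Finset.mem_range.1 hm), zero_mul],
    zero_add, besselClifford, ← tsum_mul_left]
  refine tsum_congr fun m ↦ ?_
  rw [besselCliffordCoeff_neg_natCast_add]
  ring

end BesselClifford

section BesselRegular

/-- The solution of `(x ^ (2 * μ + 1) * u')' + lam * x ^ (2 * μ + 1) * u = 0` regular at `0`. For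
`lam > 0` and `x > 0` it is a constant multiple of `x ^ (-μ) * J_μ (√lam * x)`. -/
noncomputable def besselRegular (μ lam x : ℝ) : ℝ := besselClifford μ (-(lam * x ^ 2 / 4))

variable {μ lam x T : ℝ}

lemma hasDerivAt_besselRegular (μ lam x : ℝ) :
    HasDerivAt (besselRegular μ lam) (-(lam * x / 2) * besselRegular (μ + 1) lam x) x := by
  have hinner : HasDerivAt (fun x : ℝ ↦ -(lam * x ^ 2 / 4)) (-(lam * x / 2)) x := by
    refine ((((hasDerivAt_pow 2 x).const_mul lam).div_const 4).neg).congr_deriv ?_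
    norm_num
    ring
  exact ((hasDerivAt_besselClifford μ _).comp x hinner).congr_deriv (mul_comm _ _)

@[fun_prop]
lemma continuous_besselRegular (μ lam : ℝ) : Continuous (besselRegular μ lam) := by
  unfold besselRegular
  fun_prop

lemma besselRegular_zero (μ lam : ℝ) : besselRegular μ lam 0 = (Real.Gamma (μ + 1))⁻¹ := by
  simp [besselRegular, besselClifford_zero]

lemma hasDerivAt_rpow_mul_deriv_besselRegular (μ lam : ℝ) (hx : 0 < x) :
    HasDerivAt (fun t ↦ t ^ (2 * μ + 1) * (-(lam * t / 2) * besselRegular (μ + 1) lam t))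
      (-(lam * x ^ (2 * μ + 1) * besselRegular μ lam x)) x := by
  have hderiv := (Real.hasDerivAt_rpow_const (p := 2 * μ + 1) (Or.inl hx.ne')).mul
    ((((hasDerivAt_id x).const_mul lam).div_const 2).neg.mul
      (hasDerivAt_besselRegular (μ + 1) lam x))
  refine hderiv.congr_deriv ?_
  have hrec : -(lam * x ^ 2 / 4) * besselRegular (μ + 1 + 1) lam x +
      (μ + 1) * besselRegular (μ + 1) lam x = besselRegular μ lam x :=
    besselClifford_recurrence μ _
  have hpow : x ^ (2 * μ + 1) = x ^ (2 * μ + 1 - 1) * x := by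
    rw [← Real.rpow_add_one hx.ne', sub_add_cancel]
  simp only [id, Pi.neg_apply, Pi.mul_apply]
  rw [hpow]
  linear_combination (-lam * x ^ (2 * μ + 1 - 1) * x) * hrec

lemma hasDerivAt_rpow_mul_besselRegular_div (hx : 0 < x) (hne : besselRegular (-μ) lam x ≠ 0) :
    HasDerivAt (fun t ↦ t ^ (2 * μ) * besselRegular μ lam t / besselRegular (-μ) lam t)
      (2 * x ^ (2 * μ - 1) * (μ * (besselRegular μ lam 0 * besselRegular (-μ) lam 0)) /
        besselRegular (-μ) lam x ^ 2) x := by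
  have hwr : -(lam * x ^ 2 / 4) * (besselRegular (μ + 1) lam x * besselRegular (-μ) lam x -
        besselRegular μ lam x * besselRegular (-μ + 1) lam x) +
      μ * (besselRegular μ lam x * besselRegular (-μ) lam x) =
      μ * (besselRegular μ lam 0 * besselRegular (-μ) lam 0) := by
    simp only [besselRegular_zero, ← besselClifford_zero]
    exact besselClifford_wronskian μ _
  have hderiv := ((Real.hasDerivAt_rpow_const (p := 2 * μ) (Or.inl hx.ne')).mul
    (hasDerivAt_besselRegular μ lam x)).div (hasDerivAt_besselRegular (-μ) lam x) hne
  refine hderiv.congr_deriv ?_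
  have hpow : x ^ (2 * μ) = x ^ (2 * μ - 1) * x := by
    rw [← Real.rpow_add_one hx.ne', sub_add_cancel]
  rw [← hwr, Pi.mul_apply, hpow]
  ring

lemma besselRegular_ne_zero_of_neg (hμ : 0 < μ)
    (hne : ∀ x ∈ Icc 0 T, besselRegular (-μ) lam x ≠ 0) :
    ∀ x ∈ Ioc 0 T, besselRegular μ lam x ≠ 0 := by
  intro x hx hzero
  have hcont : ContinuousOn
      (fun t ↦ t ^ (2 * μ) * besselRegular μ lam t / besselRegular (-μ) lam t) (Icc 0 x) :=
    ((Real.continuous_rpow_const (by positivity)).mul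
      (continuous_besselRegular μ lam)).continuousOn.div
      (continuous_besselRegular (-μ) lam).continuousOn
      fun t ht ↦ hne t ⟨ht.1, ht.2.trans hx.2⟩
  obtain ⟨c, hc, hderiv⟩ := exists_hasDerivAt_eq_zero hx.1 hcont
    (by simp [hzero, Real.zero_rpow (by positivity : 2 * μ ≠ 0)])
    fun t ht ↦ hasDerivAt_rpow_mul_besselRegular_div ht.1
      (hne t ⟨ht.1.le, ht.2.le.trans hx.2⟩)
  have hrpow : c ^ (2 * μ - 1) ≠ 0 := (Real.rpow_pos_of_pos hc.1 _).ne'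
  have hzero_pos : besselRegular μ lam 0 ≠ 0 := by
    rw [besselRegular_zero]
    exact inv_ne_zero (Real.Gamma_pos_of_pos (by positivity)).ne'
  have hzero_neg := hne 0 ⟨le_rfl, hx.1.le.trans hx.2⟩
  have hc_ne := hne c ⟨hc.1.le, hc.2.le.trans hx.2⟩
  exact absurd hderiv (by positivity)

lemma besselRegular_pos (hμ : -1 < μ) (hne : ∀ x ∈ Ioc 0 T, besselRegular μ lam x ≠ 0) :
    ∀ x ∈ Icc 0 T, 0 < besselRegular μ lam x := by
  intro x hx
  have hzero : 0 < besselRegular μ lam 0 := by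
    rw [besselRegular_zero]
    exact inv_pos.2 (Real.Gamma_pos_of_pos (by linarith))
  by_contra! hnonpos
  obtain ⟨c, hc, hc_zero⟩ := intermediate_value_Icc' hx.1
    (continuous_besselRegular μ lam).continuousOn ⟨hnonpos, hzero.le⟩
  have hc_pos : 0 < c := hc.1.lt_of_ne (by rintro rfl; exact hzero.ne' hc_zero)
  exact hne c ⟨hc_pos, hc.2.trans hx.2⟩ hc_zero

end BesselRegular

section BesselJ

variable {μ ν lam x T : ℝ}

lemma besselJ_eq_rpow_mul_besselRegular (μ : ℝ) (hx : 0 < x) :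
    besselJ μ x = (x / 2) ^ μ * besselRegular μ 1 x := by
  have hx' : 0 < x / 2 := by positivity
  rw [besselJ, besselRegular, besselClifford, ← tsum_mul_left]
  refine tsum_congr fun m ↦ ?_
  have hpow : (x / 2) ^ (2 * (m : ℝ) + μ) = (x / 2) ^ μ * (x ^ 2 / 4) ^ m := by
    rw [Real.rpow_add hx', mul_comm, Real.rpow_mul hx'.le, Real.rpow_natCast, Real.rpow_two]
    ring
  rw [hpow, besselCliffordCoeff, one_mul, neg_pow (x ^ 2 / 4)]
  ring

lemma besselJ_ne_zero_iff (μ : ℝ) (hx : 0 < x) : besselJ μ x ≠ 0 ↔ besselRegular μ 1 x ≠ 0 := by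
  have hrpow : (x / 2) ^ μ ≠ 0 := (Real.rpow_pos_of_pos (by positivity) μ).ne'
  rw [besselJ_eq_rpow_mul_besselRegular μ hx, mul_ne_zero_iff, and_iff_right hrpow]

lemma besselRegular_one_mul_sqrt (μ : ℝ) (hlam : 0 ≤ lam) (x : ℝ) :
    besselRegular μ 1 (x * √lam) = besselRegular μ lam x := by
  rw [besselRegular, besselRegular, mul_pow, Real.sq_sqrt hlam, one_mul, mul_comm]

lemma rpow_neg_mul_besselJ_mul_sqrt (μ : ℝ) (hlam : 0 < lam) (hx : 0 < x) :
    x ^ (-μ) * besselJ μ (x * √lam) = (√lam / 2) ^ μ * besselRegular μ lam x := by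
  rw [besselJ_eq_rpow_mul_besselRegular μ (by positivity), besselRegular_one_mul_sqrt μ hlam.le,
    mul_div_assoc, Real.mul_rpow hx.le (by positivity), mul_assoc, ← mul_assoc,
    ← Real.rpow_add hx, neg_add_cancel, Real.rpow_zero, one_mul]

theorem besselJ_neg_ne_zero (hν : ν < 0) (hne : ∀ t, 0 < t → t ≤ T → besselJ ν t ≠ 0) :
    ∀ t, 0 < t → t ≤ T → besselJ (-ν) t ≠ 0 := by
  have hreg (t : ℝ) (ht : 0 < t) (htT : t ≤ T) : besselRegular ν 1 t ≠ 0 :=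
    (besselJ_ne_zero_iff ν ht).1 (hne t ht htT)
  intro t ht htT
  rw [besselJ_ne_zero_iff (-ν) ht]
  by_cases hpole : Real.Gamma (ν + 1) = 0
  · obtain ⟨k, hk⟩ : ∃ k : ℕ, ν = -k := by
      obtain ⟨m, hm⟩ := (Real.Gamma_eq_zero_iff _).1 hpole
      exact ⟨m + 1, by push_cast; linarith⟩
    have hneg := hreg t ht htT
    rw [hk, besselRegular, besselClifford_neg_natCast] at hneg
    rw [hk, neg_neg]
    exact right_ne_zero_of_mul hneg
  · refine besselRegular_ne_zero_of_neg (neg_pos.2 hν) (fun s hs ↦ ?_) t ⟨ht, htT⟩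
    rw [neg_neg]
    rcases hs.1.eq_or_lt with rfl | hs_pos
    · rw [besselRegular_zero]
      exact inv_ne_zero hpole
    · exact hreg s hs_pos hs.2

lemma besselRegular_pos_of_besselJ_ne_zero (hμ : -1 < μ) (hlam : 0 < lam)
    (hne : ∀ t, 0 < t → t ≤ √lam → besselJ μ t ≠ 0) :
    ∀ x ∈ Icc 0 1, 0 < besselRegular μ lam x := by
  have hsqrt : 0 < √lam := Real.sqrt_pos.2 hlam
  refine besselRegular_pos hμ fun x hx ↦ ?_
  have hx_pos : 0 < x * √lam := mul_pos hx.1 hsqrt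
  rw [← besselRegular_one_mul_sqrt μ hlam.le, ← besselJ_ne_zero_iff μ hx_pos]
  exact hne _ hx_pos (mul_le_of_le_one_left hsqrt.le hx.2)

lemma mul_besselRegular_lt_of_besselJ {δ η : ℝ} (hlam : 0 < lam) (hη : 0 < η)
    (h : 0 < besselJ μ √lam - δ * η ^ (-μ) * besselJ μ (η * √lam)) :
    δ * besselRegular μ lam η < besselRegular μ lam 1 := by
  have hone : besselJ μ √lam = (√lam / 2) ^ μ * besselRegular μ lam 1 := by
    simpa using rpow_neg_mul_besselJ_mul_sqrt μ hlam one_pos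
  have hrpow : 0 < (√lam / 2) ^ μ := Real.rpow_pos_of_pos (by positivity) μ
  rw [mul_assoc, rpow_neg_mul_besselJ_mul_sqrt μ hlam hη, hone, mul_left_comm, ← mul_sub] at h
  exact sub_pos.1 (pos_of_mul_pos_right h hrpow.le)

end BesselJ

theorem antitoneOn_div_besselRegular {α lam μ : ℝ} {y : ℝ → ℝ} (hα : 0 < α)
    (hμ : α = 2 * μ + 1) (hpos : ∀ x ∈ Icc 0 1, 0 < besselRegular μ lam x)
    (hy1 : ∀ x ∈ Icc (0 : ℝ) 1, DifferentiableAt ℝ y x)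
    (hy1c : ContinuousOn (deriv y) (Icc 0 1))
    (hy2 : ∀ x ∈ Ioo (0 : ℝ) 1, DifferentiableAt ℝ (deriv y) x)
    (hineq : ∀ x ∈ Ioo (0 : ℝ) 1,
      0 ≤ -(α * x ^ (α - 1) * deriv y x + x ^ α * deriv (deriv y) x) - lam * x ^ α * y x) :
    AntitoneOn (fun x ↦ y x / besselRegular μ lam x) (Icc 0 1) := by
  refine antitoneOn_div_of_sturmLiouville
    (p := fun x ↦ x ^ α) (q := fun x ↦ lam * x ^ α)
    (Lu := fun x ↦ α * x ^ (α - 1) * deriv y x + x ^ α * deriv (deriv y) x)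
    (Real.continuous_rpow_const hα.le).continuousOn (Real.zero_rpow hα.ne')
    (fun x hx ↦ Real.rpow_pos_of_pos hx.1 α)
    (fun x hx ↦ (hy1 x hx).continuousAt.continuousWithinAt) (by fun_prop) hy1c
    (v' := fun x ↦ -(lam * x / 2) * besselRegular (μ + 1) lam x) (by fun_prop)
    (fun x hx ↦ (hy1 x (Ioo_subset_Icc_self hx)).hasDerivAt)
    (fun x _ ↦ hasDerivAt_besselRegular μ lam x) (fun x hx ↦ ?_) (fun x hx ↦ ?_)
    (fun x hx ↦ by linarith [hineq x hx]) hpos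
  · exact (Real.hasDerivAt_rpow_const (Or.inl hx.1.ne')).mul (hy2 x hx).hasDerivAt
  · simpa only [hμ] using hasDerivAt_rpow_mul_deriv_besselRegular μ lam hx.1

theorem maximum_principle_pos_lambda_general {α lam δ η ν : ℝ} (hα : 0 < α)
    (hν : ν = (1 - α) / 2) (hη0 : 0 < η) (hη1 : η ≤ 1) (hlam : 0 < lam)
    (hzero : ∀ t, 0 < t → t ≤ √lam → besselJ (-ν) t ≠ 0) (hδ : 0 ≤ δ)
    (hH : 0 < besselJ (-ν) √lam - δ * η ^ ν * besselJ (-ν) (η * √lam)) {y : ℝ → ℝ}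
    (hy1 : ∀ x ∈ Icc (0 : ℝ) 1, DifferentiableAt ℝ y x)
    (hy1c : ContinuousOn (deriv y) (Icc 0 1))
    (hy2 : ∀ x ∈ Ioo (0 : ℝ) 1, DifferentiableAt ℝ (deriv y) x)
    (hineq : ∀ x ∈ Ioo (0 : ℝ) 1,
      0 ≤ -(α * x ^ (α - 1) * deriv y x + x ^ α * deriv (deriv y) x) - lam * x ^ α * y x)
    (hbc : δ * y η ≤ y 1) :
    ∀ x ∈ Icc (0 : ℝ) 1, 0 ≤ y x := by
  have hpos : ∀ x ∈ Icc 0 1, 0 < besselRegular (-ν) lam x :=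
    besselRegular_pos_of_besselJ_ne_zero (by linarith) hlam hzero
  have hanti : AntitoneOn (fun x ↦ y x / besselRegular (-ν) lam x) (Icc 0 1) :=
    antitoneOn_div_besselRegular hα (by linarith) hpos hy1 hy1c hy2 hineq
  have hlt : δ * besselRegular (-ν) lam η < besselRegular (-ν) lam 1 :=
    mul_besselRegular_lt_of_besselJ hlam hη0 (by rwa [neg_neg])
  exact nonneg_of_antitoneOn_div hanti hpos ⟨hη0.le, hη1⟩ hδ hlt hbc

/-- **Maximum principle for positive `λ` (Proposition 4.2, (Max₁)).**
For `α ∈ (4n−3, 4n−1)`, `ν = (1−α)/2`, `0 < η < 1` and hypothesis `(H₀)`: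
if `y ∈ C¹[0,1]` is twice differentiable on `(0,1)` and satisfies
`−(x^α y')' − λ x^α y ≥ 0` on `(0,1)`, `y'(0) = 0` and `y(1) ≥ δ·y(η)`,
then `y ≥ 0` on `[0,1]`. -/
theorem maximum_principle_pos_lambda (n : ℕ) (hn : 1 ≤ n) (α lam δ η ν : ℝ)
    (hα1 : 4 * (n : ℝ) - 3 < α) (hα2 : α < 4 * (n : ℝ) - 1)
    (hν : ν = (1 - α) / 2)
    (hη0 : 0 < η) (hη1 : η < 1)
    (hlam : 0 < lam)
    (hzero : ∀ t : ℝ, 0 < t → t ≤ Real.sqrt lam → besselJ ν t ≠ 0)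
    (hδ0 : 0 < δ) (hδ1 : δ < 1)
    (hH1 : 0 ≤ δ * η ^ ν * besselJ ν (η * Real.sqrt lam) - besselJ ν (Real.sqrt lam))
    (hH2 : 0 < besselJ (-ν) (Real.sqrt lam)
        - δ * η ^ ν * besselJ (-ν) (η * Real.sqrt lam))
    (y : ℝ → ℝ)
    (hyc : ContinuousOn y (Set.Icc 0 1))
    (hy1 : ∀ x ∈ Set.Icc (0 : ℝ) 1, DifferentiableAt ℝ y x)
    (hy1c : ContinuousOn (deriv y) (Set.Icc 0 1))
    (hy2 : ∀ x ∈ Set.Ioo (0 : ℝ) 1, DifferentiableAt ℝ (deriv y) x)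
    (hineq : ∀ x ∈ Set.Ioo (0 : ℝ) 1,
      0 ≤ -(α * x ^ (α - 1) * deriv y x + x ^ α * deriv (deriv y) x)
        - lam * x ^ α * y x)
    (hbc0 : deriv y 0 = 0) (hbc1 : δ * y η ≤ y 1) :
    ∀ x ∈ Set.Icc (0 : ℝ) 1, 0 ≤ y x := by
  have hα : 1 < α := by linarith [(Nat.one_le_cast (α := ℝ)).2 hn]
  exact maximum_principle_pos_lambda_general (by linarith) hν hη0 hη1.le hlam
    (besselJ_neg_ne_zero (by linarith) hzero) hδ0.le hH2 hy1 hy1c hy2 hineq hbc1
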